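/- arXiv:2208.04180 — 3 statements merged into one kernel-verified Lean document; each statement's English description precedes it below -/
import Mathlib

section
/- Let Ψ be a parse tree and let α be a height reducing rotation applicable at an inner node v of Ψ. Then (a) the subtree α(Ψ_v) replacing Ψ_v has height exactly height(Ψ_v) − 1, and (b) its total balance satisfies B(α(Ψ_v)) ≤ B(Ψ_v) − 2. -/
/-! ### Parse trees

A parse tree is a finite binary tree in which every inner node has exactly
two children.  Nodes of a parse tree are identified either with the subtree
rooted at them, or with the path (list of booleans, `false` = left,
`true` = right) leading to them from the root. -/

inductive PTree : Type
  | leaf : PTree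
  | node : PTree → PTree → PTree

namespace PTree

/-- The height of a parse tree: the maximal number of nodes on a path from
the root to a leaf (a leaf has height 1). -/
def height : PTree → ℕ
  | leaf => 1
  | node l r => 1 + max l.height r.height

/-- The number of leaves `‖Ψ‖` of a parse tree. -/
def leaves : PTree → ℕ
  | leaf => 1
  | node l r => l.leaves + r.leaves

/-- `balance(v)`: height of the right subtree minus height of the left
subtree (0 for a leaf). -/
def bal : PTree → ℤ
  | leaf => 0
  | node l r => (r.height : ℤ) - (l.height : ℤ)

/-- The absolute balance `|balance(v)|`. -/
def abal (t : PTree) : ℤ := |t.bal|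

/-- `B(Ψ)`: the sum of the absolute balances of all (inner) nodes. -/
def totalBal : PTree → ℤ
  | leaf => 0
  | node l r => |(r.height : ℤ) - (l.height : ℤ)| + l.totalBal + r.totalBal

def isLeaf : PTree → Prop
  | leaf => True
  | node _ _ => False

/-- A node is *green* if `height(Ψ_v) ≤ 10·log₂‖Ψ_v‖` (leaves are green by
convention). -/
def Green (t : PTree) : Prop :=
  t.isLeaf ∨ (t.height : ℝ) ≤ 10 * Real.logb 2 (t.leaves : ℝ)

/-- A node is *yellow* if `height(Ψ_v) − 1 ≤ 10·log₂‖Ψ_v‖ < height(Ψ_v)`. -/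
def Yellow (t : PTree) : Prop :=
  ¬ t.isLeaf ∧ 10 * Real.logb 2 (t.leaves : ℝ) < (t.height : ℝ) ∧
    (t.height : ℝ) - 1 ≤ 10 * Real.logb 2 (t.leaves : ℝ)

/-- A node is *red* if it is neither green nor yellow. -/
def Red (t : PTree) : Prop := ¬ t.Green ∧ ¬ t.Yellow

/-- `IsSubtree t s`: `t` is the subtree of `s` rooted at some node of `s`. -/
inductive IsSubtree : PTree → PTree → Prop
  | refl (t : PTree) : IsSubtree t t
  | left {t l r : PTree} : IsSubtree t l → IsSubtree t (node l r)
  | right {t l r : PTree} : IsSubtree t r → IsSubtree t (node l r)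

/-- The subtree rooted at the node reached by following the path `p`
(`false` = left child, `true` = right child), if it exists. -/
def subtreeAt : PTree → List Bool → Option PTree
  | t, [] => some t
  | leaf, _ :: _ => none
  | node l _, false :: p => subtreeAt l p
  | node _ r, true :: p => subtreeAt r p

/-- Replace the subtree at path `p` by `s`. -/
def replaceAt : PTree → List Bool → PTree → PTree
  | _, [], s => s
  | leaf, _ :: _, _ => leaf
  | node l r, false :: p, s => node (replaceAt l p s) r
  | node l r, true :: p, s => node l (replaceAt r p s)

/-- `onLongPath t p`: the node of `t` reached by the path `p` lies on the
long path `lp(root of t)`.  The long path of `v` is `v` itself if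
`balance(v) = 0` (in particular if `v` is a leaf) and otherwise continues
into the strictly deeper subtree. -/
def onLongPath : PTree → List Bool → Prop
  | _, [] => True
  | leaf, _ :: _ => False
  | node l r, false :: p => r.height < l.height ∧ onLongPath l p
  | node l r, true :: p => l.height < r.height ∧ onLongPath r p

/-- The long path `lp(v)` of (the subtree rooted at) `v`, as the list of the
subtrees rooted at its nodes. -/
def lpList : PTree → List PTree
  | leaf => [leaf]
  | node l r =>
    if l.height = r.height then [node l r]
    else if l.height < r.height then node l r :: lpList r
    else node l r :: lpList l

/-- `IsComb t a b` : `t` is an inner node whose two subtrees are `a` and `b`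
(in either order). -/
def IsComb (t a b : PTree) : Prop := t = node a b ∨ t = node b a

end PTree

/-! Since `|x - y| = 2 * max x y - x - y`, the absolute balance of a node is an affine function of
its height and of the heights of its children. Summed over the two nodes taking part in a rotation,
the heights of the three subtrees that are merely moved cancel, so `B` drops by twice the loss of
height of the whole subtree plus the loss of height from `w` to `w'`. In a height reducing rotation
`Ψ_↑` alone determines the heights of `w`, of the old subtree and of the new subtree, so the whole
subtree loses exactly one level, and `w'` is at most as high as `Ψ_↑`, hence lower than `w`. -/

namespace PTree

section Comb

variable {t a b : PTree}

theorem IsComb.height_eq (h : IsComb t a b) : t.height = max a.height b.height + 1 := by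
  rcases h with rfl | rfl
  · exact Nat.add_comm _ _
  · rw [height, max_comm, Nat.add_comm]

theorem IsComb.height_eq_of_le (h : IsComb t a b) (hle : b.height ≤ a.height) :
    t.height = a.height + 1 := by
  rw [h.height_eq, max_eq_left hle]

theorem IsComb.totalBal_eq_abs (h : IsComb t a b) :
    t.totalBal = |(a.height : ℤ) - b.height| + a.totalBal + b.totalBal := by
  rcases h with rfl | rfl
  · rw [totalBal, abs_sub_comm]
  · rw [totalBal, add_right_comm]

theorem IsComb.totalBal_eq (h : IsComb t a b) :
    t.totalBal =
      2 * ((t.height : ℤ) - 1) - a.height - b.height + a.totalBal + b.totalBal := by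
  have abs_eq : |(a.height : ℤ) - b.height| =
      2 * max (a.height : ℤ) b.height - a.height - b.height := by
    rw [← max_sub_min_eq_abs']
    linear_combination -min_add_max (a.height : ℤ) b.height
  rw [h.totalBal_eq_abs, abs_eq, h.height_eq]
  push_cast
  ring

end Comb

section Rotation

variable {up down stay w before after w' : PTree}

theorem totalBal_sub_totalBal_of_rotation (hw : IsComb w up stay) (hbefore : IsComb before w down)
    (hw' : IsComb w' down stay) (hafter : IsComb after up w') :
    before.totalBal - after.totalBal =
      2 * ((before.height : ℤ) - after.height) + ((w.height : ℤ) - w'.height) := by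
  rw [hbefore.totalBal_eq, hw.totalBal_eq, hafter.totalBal_eq, hw'.totalBal_eq]
  ring

theorem height_lt_height_of_heightReducing (hw : IsComb w up stay) (hw' : IsComb w' down stay)
    (hhr : max down.height stay.height < up.height) : w'.height < w.height := by
  have hstay : stay.height < up.height := (le_max_right _ _).trans_lt hhr
  rw [hw'.height_eq, hw.height_eq_of_le hstay.le]
  exact Nat.succ_lt_succ hhr

theorem height_succ_eq_of_heightReducing (hw : IsComb w up stay) (hbefore : IsComb before w down)
    (hw' : IsComb w' down stay) (hafter : IsComb after up w')
    (hhr : max down.height stay.height < up.height) : after.height + 1 = before.height := by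
  obtain ⟨hdown, hstay⟩ := max_lt_iff.mp hhr
  have w_height : w.height = up.height + 1 := hw.height_eq_of_le hstay.le
  have after_height : after.height = up.height + 1 :=
    hafter.height_eq_of_le (hw'.height_eq.trans_le hhr)
  have before_height : before.height = w.height + 1 :=
    hbefore.height_eq_of_le (hdown.le.trans (w_height ▸ Nat.le_succ _))
  rw [before_height, w_height, after_height]

end Rotation

end PTree

/-- Let `α` be a height reducing rotation applicable at an
inner node `v` of a parse tree `Ψ`: before the rotation the subtree `Ψ_v`
(here `before`) has children `w` (combining `Ψ_↑ = up` and `Ψ_→ = stay`) and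
`Ψ_↓ = down`; after the rotation the replaced subtree (`after`) has children
`up` and the new node `w'` (combining `down` and `stay`); the rotation is
height reducing, i.e. `height(up) > max(height(down), height(stay))`.
Then (a) `height(α(Ψ_v)) = height(Ψ_v) − 1`, and
(b) `B(α(Ψ_v)) ≤ B(Ψ_v) − 2`. -/
theorem height_reducing_rotation_height_and_balance
    (up down stay w before after w' : PTree)
    (hw : PTree.IsComb w up stay)
    (hbefore : PTree.IsComb before w down)
    (hw' : PTree.IsComb w' down stay)
    (hafter : PTree.IsComb after up w')
    (hhr : up.height > max down.height stay.height) :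
    after.height + 1 = before.height ∧
    after.totalBal ≤ before.totalBal - 2 := by
  have height_drop : after.height + 1 = before.height :=
    PTree.height_succ_eq_of_heightReducing hw hbefore hw' hafter hhr
  have w_drop : w'.height < w.height := PTree.height_lt_height_of_heightReducing hw hw' hhr
  have totalBal_drop := PTree.totalBal_sub_totalBal_of_rotation hw hbefore hw' hafter
  exact ⟨height_drop, by lia⟩
end

section
/- Let Ψ be a parse tree and let α be a height reducing rotation applicable at an inner node v of Ψ. If, before the rotation, every node of Ψ_v is green, then after applying α at v the node w′ (the lower of the two inner nodes created by the rotation, having the subtrees Ψ_↓ and Ψ_→ as children) is green or yellow. -/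
/-! Giving a green subtree a sibling adds at least one leaf, so the height of the subtree is at most
`10 * log₂ n`, where `n` is the number of leaves of the parent; this also holds for a single leaf,
which is green only by convention, because then `2 ≤ n`. The parent is one higher than the higher of
its two children, and this one is what separates yellow from green. The subtrees of `w'` are already
subtrees of `v`, hence green before the rotation. -/

namespace PTree

variable {a b c t : PTree}

theorem leaves_pos (t : PTree) : 0 < t.leaves := by
  induction t with
  | leaf => exact Nat.one_pos
  | node l r ihl _ => exact Nat.add_pos_left ihl r.leaves

theorem IsSubtree.trans (hab : IsSubtree a b) (hbc : IsSubtree b c) : IsSubtree a c := by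
  induction hbc with
  | refl => exact hab
  | left _ ih => exact .left ih
  | right _ ih => exact .right ih

namespace IsComb

theorem symm (h : IsComb t a b) : IsComb t b a :=
  Or.symm h

theorem isSubtree_fst (h : IsComb t a b) : IsSubtree a t := by
  rcases h with rfl | rfl
  · exact .left (.refl a)
  · exact .right (.refl a)

theorem isSubtree_snd (h : IsComb t a b) : IsSubtree b t :=
  h.symm.isSubtree_fst

theorem height_eq_s4 (h : IsComb t a b) : t.height = max a.height b.height + 1 := by
  rcases h with rfl | rfl
  · exact Nat.add_comm _ _
  · rw [height, max_comm, Nat.add_comm]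

theorem leaves_eq (h : IsComb t a b) : t.leaves = a.leaves + b.leaves := by
  rcases h with rfl | rfl
  · rfl
  · exact Nat.add_comm _ _

theorem leaves_fst_lt (h : IsComb t a b) : a.leaves < t.leaves := by
  rw [h.leaves_eq]
  exact Nat.lt_add_of_pos_right b.leaves_pos

theorem leaves_snd_lt (h : IsComb t a b) : b.leaves < t.leaves :=
  h.symm.leaves_fst_lt

end IsComb

theorem Green.height_le_of_leaves_lt (ht : t.Green) {n : ℕ} (hn : t.leaves < n) :
    (t.height : ℝ) ≤ 10 * Real.logb 2 n := by
  rcases ht with hleaf | hheight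
  · cases t with
    | leaf =>
      have two_le : (2 : ℝ) ≤ n := by exact_mod_cast hn
      have one_le_logb : 1 ≤ Real.logb 2 n := by
        rwa [Real.le_logb_iff_rpow_le one_lt_two (by linarith), Real.rpow_one]
      rw [height, Nat.cast_one]
      linarith
    | node => exact hleaf.elim
  · have cast_leaves_pos : (0 : ℝ) < t.leaves := by exact_mod_cast t.leaves_pos
    calc (t.height : ℝ) ≤ 10 * Real.logb 2 t.leaves := hheight
      _ ≤ 10 * Real.logb 2 n := by gcongr; exact one_lt_two

theorem green_or_yellow_of_height_sub_one_le
    (ht : (t.height : ℝ) - 1 ≤ 10 * Real.logb 2 t.leaves) : t.Green ∨ t.Yellow := by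
  by_cases hgreen : t.Green
  · exact .inl hgreen
  · obtain ⟨hleaf, hheight⟩ := not_or.mp hgreen
    exact .inr ⟨hleaf, not_le.mp hheight, ht⟩

end PTree

theorem height_reducing_rotation_wprime_color_general
    {down stay w' : PTree} (hw' : PTree.IsComb w' down stay)
    (hdown : down.Green) (hstay : stay.Green) : w'.Green ∨ w'.Yellow := by
  apply PTree.green_or_yellow_of_height_sub_one_le
  calc (w'.height : ℝ) - 1 = max (down.height : ℝ) stay.height := by
        rw [hw'.height_eq_s4, Nat.cast_add_one, Nat.cast_max, add_sub_cancel_right]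
    _ ≤ 10 * Real.logb 2 w'.leaves :=
        max_le (hdown.height_le_of_leaves_lt hw'.leaves_fst_lt)
          (hstay.height_le_of_leaves_lt hw'.leaves_snd_lt)

/-- Let `α` be a height reducing rotation applicable at an
inner node `v` of `Ψ` (before-subtree `before` with deeper child `w`
combining `up` and `stay` and other child `down`; the new lower node `w'`
of the rotated subtree combines `down` and `stay`).  If before the rotation
every node of `Ψ_v` is green, then after applying `α` the node `w'` is
green or yellow. -/
theorem height_reducing_rotation_wprime_color
    (up down stay w before w' : PTree)
    (hw : PTree.IsComb w up stay)
    (hbefore : PTree.IsComb before w down)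
    (hw' : PTree.IsComb w' down stay)
    (hhr : up.height > max down.height stay.height)
    (hgreen : ∀ t, PTree.IsSubtree t before → t.Green) :
    w'.Green ∨ w'.Yellow :=
  height_reducing_rotation_wprime_color_general hw' (hgreen down hbefore.isSubtree_snd)
    (hgreen stay (hw.isSubtree_snd.trans hbefore.isSubtree_fst))
end

section
/- For every finite set Q, the transition algebra over Q — with horizontal carrier H = 𝒫(Q×Q), vertical carrier V = 𝒫((Q×Q)×(Q×Q)), neutral elements id_Q = {(q,q) | q ∈ Q} and id_{Q×Q} = {((q1,q2),(q1,q2)) | (q1,q2) ∈ Q×Q}, and the five operations F1 ⊕_HH F2 = {(q1,q3) | ∃q2: (q1,q2) ∈ F1 and (q2,q3) ∈ F2}; C1 ⊙_VV C2 = {((q1,q2),(q5,q6)) | ∃(q3,q4): ((q1,q2),(q3,q4)) ∈ C1 and ((q3,q4),(q5,q6)) ∈ C2}; C ⊙_VH F = {(q1,q2) | ∃(q3,q4): ((q1,q2),(q3,q4)) ∈ C and (q3,q4) ∈ F}; F ⊕_HV C = {((q1,q3),(q4,q5)) | ∃q2: (q1,q2) ∈ F and ((q2,q3),(q4,q5))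 ∈ C}; C ⊕_VH F = {((q1,q5),(q3,q4)) | ∃q2: ((q1,q2),(q3,q4)) ∈ C and (q2,q5) ∈ F} — satisfies all fourteen forest-algebra axioms A1–A14. -/
/-- The operations and neutral elements of a (candidate) forest algebra:
`hh` = ⊕_HH, `hv` = ⊕_HV, `vh` = ⊕_VH, `vv` = ⊙_VV, `vhd` = ⊙_VH,
`eps` = ε (neutral element of H), `box` = □ (neutral element of V). -/
structure ForestAlgebraOps (H V : Type*) where
  hh : H → H → H
  hv : H → V → V
  vh : V → H → V
  vv : V → V → V
  vhd : V → H → H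
  eps : H
  box : V

/-- The fourteen forest-algebra axioms A1–A14. -/
def IsForestAlgebra {H V : Type*} (A : ForestAlgebraOps H V) : Prop :=
  -- (A1)
  (∀ F, A.hh A.eps F = F) ∧
  (∀ F, A.hh F A.eps = F) ∧
  -- (A2)
  (∀ C, A.hv A.eps C = C) ∧
  (∀ C, A.vh C A.eps = C) ∧
  -- (A3)
  (∀ C, A.vv A.box C = C) ∧
  (∀ C, A.vv C A.box = C) ∧
  -- (A4)
  (∀ F, A.vhd A.box F = F) ∧
  -- (A5)
  (∀ F1 F2 F3, A.hh (A.hh F1 F2) F3 = A.hh F1 (A.hh F2 F3)) ∧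
  -- (A6)
  (∀ F1 F2 C, A.hv (A.hh F1 F2) C = A.hv F1 (A.hv F2 C)) ∧
  -- (A7)
  (∀ C F1 F2, A.vh (A.vh C F1) F2 = A.vh C (A.hh F1 F2)) ∧
  -- (A8)
  (∀ F1 C F2, A.vh (A.hv F1 C) F2 = A.hv F1 (A.vh C F2)) ∧
  -- (A9)
  (∀ C1 C2 C3, A.vv (A.vv C1 C2) C3 = A.vv C1 (A.vv C2 C3)) ∧
  -- (A10)
  (∀ C1 C2 F, A.vhd (A.vv C1 C2) F = A.vhd C1 (A.vhd C2 F)) ∧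
  -- (A11)
  (∀ F1 C1 F2, A.vhd (A.hv F1 C1) F2 = A.hh F1 (A.vhd C1 F2)) ∧
  -- (A12)
  (∀ F1 C1 C2, A.vv (A.hv F1 C1) C2 = A.hv F1 (A.vv C1 C2)) ∧
  -- (A13)
  (∀ C1 F1 F2, A.vhd (A.vh C1 F1) F2 = A.hh (A.vhd C1 F2) F1) ∧
  -- (A14)
  (∀ C1 F1 C2, A.vv (A.vh C1 F1) C2 = A.vh (A.vv C1 C2) F1)

/-- The transition algebra over a set of states `Q`: the horizontal carrier is
`𝒫(Q×Q)`, the vertical carrier is `𝒫((Q×Q)×(Q×Q))`, the neutral elements are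
the identity relations, and all five operations are relational joins. -/
def transitionAlgebraOps (Q : Type) :
    ForestAlgebraOps (Set (Q × Q)) (Set ((Q × Q) × (Q × Q))) where
  hh F1 F2 := {x | ∃ q1 q2 q3, (q1, q2) ∈ F1 ∧ (q2, q3) ∈ F2 ∧ x = (q1, q3)}
  hv F C := {x | ∃ q1 q2 q3 q4 q5,
    (q1, q2) ∈ F ∧ ((q2, q3), (q4, q5)) ∈ C ∧ x = ((q1, q3), (q4, q5))}
  vh C F := {x | ∃ q1 q2 q3 q4 q5,
    ((q1, q2), (q3, q4)) ∈ C ∧ (q2, q5) ∈ F ∧ x = ((q1, q5), (q3, q4))}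
  vv C1 C2 := {x | ∃ q1 q2 q3 q4 q5 q6,
    ((q1, q2), (q3, q4)) ∈ C1 ∧ ((q3, q4), (q5, q6)) ∈ C2 ∧ x = ((q1, q2), (q5, q6))}
  vhd C F := {x | ∃ q1 q2 q3 q4,
    ((q1, q2), (q3, q4)) ∈ C ∧ (q3, q4) ∈ F ∧ x = (q1, q2)}
  eps := {x | ∃ q, x = (q, q)}
  box := {x | ∃ p, x = (p, p)}

/-!
A context over `Q` is a relation on pairs of states, and contexts act on forests, the relations on
states, by preimage. Composing contexts on the left with the relations `leftComp F` and
`rightComp F`, which act on forests as `F ○ ·` and `· ○ F`, gives `F ⊕_HV ·` and `· ⊕_VH F`.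
The axioms are then the monoid laws for `○`, the functoriality of preimages, and the facts
that `leftComp` is multiplicative, `rightComp` antimultiplicative, and that the two commute
because they move different coordinates.
-/

open SetRel

section Relations

variable {α β : Type*}

lemma entourageProd_id : entourageProd (.id : SetRel α α) (.id : SetRel β β) = .id := by
  ext ⟨⟨a, b⟩, a', b'⟩
  simp only [mem_entourageProd, mem_id, Prod.mk.injEq]

lemma entourageProd_comp_entourageProd (u u' : SetRel α α) (v v' : SetRel β β) :
    entourageProd u v ○ entourageProd u' v' = entourageProd (u ○ u') (v ○ v') := by
  ext ⟨⟨a, b⟩, a', b'⟩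
  simp only [mem_comp, mem_entourageProd, Prod.exists]
  constructor
  · rintro ⟨a₁, b₁, ⟨hu, hv⟩, hu', hv'⟩
    exact ⟨⟨a₁, hu, hu'⟩, b₁, hv, hv'⟩
  · rintro ⟨⟨a₁, hu, hu'⟩, b₁, hv, hv'⟩
    exact ⟨a₁, b₁, ⟨hu, hv⟩, hu', hv'⟩

lemma preimage_entourageProd (u : SetRel α α) (v : SetRel β β) (R : SetRel α β) :
    (entourageProd u v).preimage R = u ○ R ○ v.inv := by
  ext ⟨a, b⟩
  simp only [mem_preimage, mem_comp, mem_entourageProd, mem_inv, Prod.exists]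
  constructor
  · rintro ⟨a', b', hR, hu, hv⟩
    exact ⟨b', ⟨a', hu, hR⟩, hv⟩
  · rintro ⟨b', ⟨a', hu, hR⟩, hv⟩
    exact ⟨a', b', hR, hu, hv⟩

/-- The relation on pairs whose preimage operator on `SetRel α β` is `F ○ ·`; composing with it on
the left is the operation `F ⊕_HV ·` of the transition algebra. Here `entourageProd` is just the
product of two relations; no uniformity is involved. -/
def leftComp (F : SetRel α α) : SetRel (α × β) (α × β) :=
  entourageProd F .id

/-- The relation on pairs whose preimage operator on `SetRel α β` is `· ○ F`; composing with it on
the left is the operation `· ⊕_VH F` of the transition algebra. `F` is inverted because taking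
preimages under `entourageProd u v` composes with `v.inv` on the right. -/
def rightComp (F : SetRel β β) : SetRel (α × β) (α × β) :=
  entourageProd .id F.inv

lemma leftComp_id : leftComp (β := β) (.id : SetRel α α) = .id :=
  entourageProd_id

lemma rightComp_id : rightComp (α := α) (.id : SetRel β β) = .id := by
  rw [rightComp, inv_id, entourageProd_id]

lemma leftComp_comp (F G : SetRel α α) :
    leftComp (β := β) (F ○ G) = leftComp F ○ leftComp G := by
  simp only [leftComp, entourageProd_comp_entourageProd, comp_id]

lemma rightComp_comp (F G : SetRel β β) :
    rightComp (α := α) (F ○ G) = rightComp G ○ rightComp F := by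
  simp only [rightComp, entourageProd_comp_entourageProd, comp_id, inv_comp]

lemma rightComp_comp_leftComp (F : SetRel α α) (G : SetRel β β) :
    rightComp G ○ leftComp F = leftComp F ○ rightComp G := by
  simp only [leftComp, rightComp, entourageProd_comp_entourageProd, comp_id, id_comp]

lemma preimage_leftComp (F : SetRel α α) (R : SetRel α β) : (leftComp F).preimage R = F ○ R := by
  rw [leftComp, preimage_entourageProd, inv_id, comp_id]

lemma preimage_rightComp (F : SetRel β β) (R : SetRel α β) :
    (rightComp F).preimage R = R ○ F := by
  rw [rightComp, preimage_entourageProd, inv_inv, id_comp]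

end Relations

section TransitionAlgebra

variable {Q : Type}

lemma transitionAlgebraOps_eps : (transitionAlgebraOps Q).eps = SetRel.id := by
  ext ⟨p, q⟩
  simp [transitionAlgebraOps, eq_comm]

lemma transitionAlgebraOps_box : (transitionAlgebraOps Q).box = SetRel.id := by
  ext ⟨p, q⟩
  simp [transitionAlgebraOps, Prod.ext_iff, eq_comm]

lemma transitionAlgebraOps_hh (F G : SetRel Q Q) : (transitionAlgebraOps Q).hh F G = F ○ G := by
  ext ⟨p, q⟩
  simp [transitionAlgebraOps]

lemma transitionAlgebraOps_vv (C D : SetRel (Q × Q) (Q × Q)) :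
    (transitionAlgebraOps Q).vv C D = C ○ D := by
  ext ⟨⟨p, q⟩, r, s⟩
  simp [transitionAlgebraOps]

lemma transitionAlgebraOps_vhd (C : SetRel (Q × Q) (Q × Q)) (F : SetRel Q Q) :
    (transitionAlgebraOps Q).vhd C F = C.preimage F := by
  ext ⟨p, q⟩
  simp [transitionAlgebraOps, and_comm]

lemma transitionAlgebraOps_hv (F : SetRel Q Q) (C : SetRel (Q × Q) (Q × Q)) :
    (transitionAlgebraOps Q).hv F C = leftComp F ○ C := by
  ext ⟨⟨p, q⟩, r, s⟩
  simp [transitionAlgebraOps, leftComp, mem_entourageProd, and_assoc]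

lemma transitionAlgebraOps_vh (C : SetRel (Q × Q) (Q × Q)) (F : SetRel Q Q) :
    (transitionAlgebraOps Q).vh C F = rightComp F ○ C := by
  ext ⟨⟨p, q⟩, r, s⟩
  simp [transitionAlgebraOps, rightComp, mem_entourageProd, and_assoc, and_comm]

end TransitionAlgebra

theorem transition_algebra_is_forest_algebra_general (Q : Type) :
    IsForestAlgebra (transitionAlgebraOps Q) := by
  simp only [IsForestAlgebra, transitionAlgebraOps_eps, transitionAlgebraOps_box,
    transitionAlgebraOps_hh, transitionAlgebraOps_vv, transitionAlgebraOps_vhd,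
    transitionAlgebraOps_hv, transitionAlgebraOps_vh]
  refine ⟨id_comp, comp_id, fun _ ↦ ?A2_left, fun _ ↦ ?A2_right, id_comp, comp_id, preimage_id,
    comp_assoc, fun _ _ _ ↦ ?A6, fun _ _ _ ↦ ?A7, fun _ _ _ ↦ ?A8, comp_assoc, preimage_comp,
    fun _ _ _ ↦ ?A11, fun _ _ _ ↦ ?A12, fun _ _ _ ↦ ?A13, fun _ _ _ ↦ ?A14⟩
  case A2_left => rw [leftComp_id, id_comp]
  case A2_right => rw [rightComp_id, id_comp]
  case A6 => rw [leftComp_comp, comp_assoc]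
  case A7 => rw [rightComp_comp, comp_assoc]
  case A8 => rw [← comp_assoc, rightComp_comp_leftComp, comp_assoc]
  case A11 => rw [preimage_comp, preimage_leftComp]
  case A12 => rw [comp_assoc]
  case A13 => rw [preimage_comp, preimage_rightComp]
  case A14 => rw [comp_assoc]

/-- For every finite set `Q`, the transition algebra over `Q`
satisfies all fourteen forest-algebra axioms A1–A14. -/
theorem transition_algebra_is_forest_algebra (Q : Type) [Fintype Q] :
    IsForestAlgebra (transitionAlgebraOps Q) :=
  transition_algebra_is_forest_algebra_general Q
end
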